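/- Let K ⊆ ℝ^d be an isotropic simplicial polytope with unique irredundant H-representation K = ∩_{i=1}^m H_i. Fix a facet index i′ and let P = ∩_{i ≠ i′} H_i. Let v_1, …, v_d be the vertices of facet i′ and fix j′ ∈ {1,…,d}. Let Z be the affine hull of { v_j : j ≠ j′ }, and introduce cylindrical coordinates (ρ, θ, z) with origin an arbitrary point of Z ∩ K: ρ ∈ [0,∞) and θ ∈ [−π, π) are polar coordinates in the 2-dimensional plane orthogonal to Z, z ranges over Z, and θ is oriented so that points of facet i′ have θ = 0 and all of K has θ ∈ (−π, 0]. Let K_t = { x ∈ P : θ(x) ∈ [−π, t] } and S_0 = P ∩ { x : θ(x) = 0 }, and let D be the probability distribution on S_0 with density proportional to ρ(x). Then d/dt det A(K_t) |_{t=0} = ( E_{X ∼ D}[‖X‖²] − d ) · ( d/dt vol(K_t) |_{t=0} ) / vol(K). -/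

import Mathlib

open MeasureTheory Finset
open scoped ProbabilityTheory
open scoped RealInnerProductSpace

noncomputable section

abbrev Euc (d : ℕ) := EuclideanSpace ℝ (Fin d)

section GeneralSpace

variable {V : Type*} [NormedAddCommGroup V] [NormedSpace ℝ V]

/-- The dimension of a set: the rank of the direction of its affine span. -/
noncomputable def sdim (F : Set V) : ℕ := Module.finrank ℝ (affineSpan ℝ F).direction

/-- `F` is a simplex with `n` vertices (an `(n-1)`-dimensional simplex). -/
def IsSimplexWith (n : ℕ) (F : Set V) : Prop :=
  ∃ w : Fin n → V, AffineIndependent ℝ w ∧ F = convexHull ℝ (Set.range w)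

/-- A polytope is the convex hull of finitely many points. -/
def IsPolytope (P : Set V) : Prop := ∃ S : Finset V, P = convexHull ℝ (S : Set V)

/-- A facet of a `d`-dimensional polytope: an exposed face of dimension `d - 1`. -/
def IsFacetOf (d : ℕ) (P F : Set V) : Prop := IsExposed ℝ P F ∧ sdim F = d - 1

/-- A `d`-dimensional simplicial polytope: a polytope of dimension `d`, each facet of which
is a `(d-1)`-dimensional simplex (i.e. has `d` affinely independent vertices). -/
def IsSimplicialPolytope (d : ℕ) (P : Set V) : Prop :=
  IsPolytope P ∧ sdim P = d ∧ ∀ F : Set V, IsFacetOf d P F → IsSimplexWith d F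

end GeneralSpace

/-- A convex body: compact, convex, with nonempty interior. -/
def IsConvexBody {d : ℕ} (K : Set (Euc d)) : Prop :=
  IsCompact K ∧ Convex ℝ K ∧ (interior K).Nonempty

/-- The barycenter `μ_K` of the uniform distribution on `K`. -/
noncomputable def centroid {d : ℕ} (K : Set (Euc d)) : Euc d :=
  (volume K).toReal⁻¹ • ∫ x in K, x

/-- The covariance matrix `A(K)` of the uniform distribution on `K`. -/
noncomputable def covMatrix {d : ℕ} (K : Set (Euc d)) : Matrix (Fin d) (Fin d) ℝ :=
  Matrix.of fun i j =>
    (volume K).toReal⁻¹ * ∫ x in K, (x i - centroid K i) * (x j - centroid K j)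

/-- The isotropic constant `L_K`, defined by `L_K ^ (2d) = det A(K) / vol(K) ^ 2`. -/
noncomputable def isoConst {d : ℕ} (K : Set (Euc d)) : ℝ :=
  ((covMatrix K).det / (volume K).toReal ^ 2) ^ ((2 * (d : ℝ))⁻¹)

/-- `K` is isotropic: its barycenter is the origin and its covariance matrix is the identity. -/
def IsIsotropic {d : ℕ} (K : Set (Euc d)) : Prop :=
  centroid K = 0 ∧ covMatrix K = 1

/-- `P` is a local extremum (local maximum or local minimum) of `K ↦ L_K` among convex bodies,
with respect to the Hausdorff metric. -/
def IsLocalExtremumOfIsoConst {d : ℕ} (P : Set (Euc d)) : Prop :=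
  (∃ ε > 0, ∀ K : Set (Euc d), IsConvexBody K →
      Metric.hausdorffDist K P < ε → isoConst K ≤ isoConst P) ∨
  (∃ ε > 0, ∀ K : Set (Euc d), IsConvexBody K →
      Metric.hausdorffDist K P < ε → isoConst P ≤ isoConst K)

/-- The polar angle of `(a, b) ∈ ℝ²`, normalized to lie in `[-π, π)`. -/
noncomputable def polarAngle (a b : ℝ) : ℝ :=
  if Complex.arg ⟨a, b⟩ = Real.pi then -Real.pi else Complex.arg ⟨a, b⟩

/-- The Jacobi formula at the identity. -/
theorem hasDerivAt_det_of_eq_one {n : Type*} [Fintype n] [DecidableEq n]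
    {A : ℝ → Matrix n n ℝ} {A' : Matrix n n ℝ} {t : ℝ}
    (hA : ∀ i j, HasDerivAt (fun s => A s i j) (A' i j) t) (h1 : A t = 1) :
    HasDerivAt (fun s => (A s).det) A'.trace t := by
  simp only [Matrix.det_apply']
  have key : HasDerivAt
      (fun s => ∑ σ : Equiv.Perm n, ((Equiv.Perm.sign σ : ℤ) : ℝ) * ∏ i, A s (σ i) i)
      (∑ σ : Equiv.Perm n, ((Equiv.Perm.sign σ : ℤ) : ℝ) *
        ∑ i, (∏ j ∈ Finset.univ.erase i, A t (σ j) j) • A' (σ i) i) t :=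
    HasDerivAt.fun_sum fun σ _ =>
      (HasDerivAt.fun_finsetProd (fun i _ => hA (σ i) i)).const_mul _
  convert key using 1
  rw [Finset.sum_eq_single (1 : Equiv.Perm n)]
  · simp [h1, Matrix.trace]
  · intro σ _ hσ
    refine mul_eq_zero_of_right _ (Finset.sum_eq_zero fun i _ => ?_)
    have : ∃ j, j ≠ i ∧ σ j ≠ j := by
      by_contra! hcon
      refine hσ (Equiv.ext fun j => ?_)
      by_cases hj : j = i
      · subst hj
        by_contra hne
        have h2 := hcon (σ j) hne
        exact hne (σ.injective h2)
      · exact hcon j hj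
    obtain ⟨j, hji, hj⟩ := this
    rw [Finset.prod_eq_zero (i := j) (by simp [hji]) (by simp [h1, hj]), zero_smul]
  · simp

/-- The level sets of a nonzero linear functional are null sets. -/
theorem addHaar_linear_levelSet {V : Type*} [NormedAddCommGroup V] [NormedSpace ℝ V]
    [MeasurableSpace V] [BorelSpace V] [FiniteDimensional ℝ V] (μ : Measure V)
    [μ.IsAddHaarMeasure] (l : V →ₗ[ℝ] ℝ) (hl : l ≠ 0) (r : ℝ) : μ {p | l p = r} = 0 := by
  rcases Set.eq_empty_or_nonempty {p | l p = r} with h | ⟨p₀, hp₀⟩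
  · simp [h]
  · have h1 : {p | l p = r} = (fun p => p + -p₀) ⁻¹' (LinearMap.ker l : Set V) := by
      ext p
      have : l p₀ = r := hp₀
      simp [this, ← sub_eq_add_neg, sub_eq_zero]
    rw [h1, measure_preimage_add_right]
    exact Measure.addHaar_submodule μ _ (by simpa [LinearMap.ker_eq_top] using hl)

/-- Fibrewise rescaling `y = X p * σ` of the second coordinate, on the set `0 < X p`. -/
theorem integral_prod_fiber_rescale {α : Type*} [MeasurableSpace α] (μ : Measure α) [SFinite μ]
    {X : α → ℝ} (hX : Measurable X) {h : α × ℝ → ℝ} (hm : Measurable h)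
    (hi : IntegrableOn h {q | 0 < X q.1} (μ.prod volume)) :
    Integrable (fun q : α × ℝ => max (X q.1) 0 * h (q.1, X q.1 * q.2)) (μ.prod volume) ∧
      ∫ q, max (X q.1) 0 * h (q.1, X q.1 * q.2) ∂(μ.prod volume) =
        ∫ q in {q | 0 < X q.1}, h q ∂(μ.prod volume) := by
  have hS : MeasurableSet {q : α × ℝ | 0 < X q.1} :=
    measurableSet_lt measurable_const (hX.comp measurable_fst)
  set h' : α × ℝ → ℝ := Set.indicator {q | 0 < X q.1} h with hh'
  have hi' : Integrable h' (μ.prod volume) := hi.integrable_indicator hS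
  have hQm : Measurable (fun q : α × ℝ => max (X q.1) 0 * h (q.1, X q.1 * q.2)) := by
    fun_prop
  have hpos : ∀ {p}, 0 < X p → ∀ y, h' (p, y) = h (p, y) := fun hp y => by
    simp [hh', hp]
  have hneg : ∀ {p}, ¬ 0 < X p → ∀ y, h' (p, y) = 0 := fun hp y => by
    simp [hh', hp]
  have hscale : ∀ (p : α) (g : ℝ → ℝ), 0 < X p →
      ∫ s, X p * g (X p * s) = ∫ y, g y := by
    intro p g hp
    rw [integral_const_mul, Measure.integral_comp_mul_left, abs_of_pos (inv_pos.2 hp),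
      smul_eq_mul, mul_inv_cancel_left₀ hp.ne']
  have hQi : Integrable (fun q : α × ℝ => max (X q.1) 0 * h (q.1, X q.1 * q.2))
      (μ.prod volume) := by
    rw [integrable_prod_iff hQm.aestronglyMeasurable]
    obtain ⟨h1, h2⟩ := (integrable_prod_iff hi'.aestronglyMeasurable).1 hi'
    constructor
    · filter_upwards [h1] with p hp
      by_cases hXp : 0 < X p
      · simp only [hpos hXp] at hp
        simpa [max_eq_left hXp.le] using (hp.comp_mul_left' hXp.ne').const_mul (X p)
      · simp [max_eq_right (not_lt.1 hXp)]
    · convert h2 using 2 with p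
      by_cases hXp : 0 < X p
      · simp only [hpos hXp, max_eq_left hXp.le, norm_mul, Real.norm_eq_abs, abs_of_pos hXp]
        exact hscale p (fun y => |h (p, y)|) hXp
      · simp [max_eq_right (not_lt.1 hXp), hneg hXp]
  refine ⟨hQi, ?_⟩
  rw [integral_prod _ hQi, ← integral_indicator hS, integral_prod _ hi']
  congr 1 with p
  by_cases hXp : 0 < X p
  · simp only [hpos hXp, max_eq_left hXp.le]
    exact hscale p (fun y => h (p, y)) hXp
  · simp [max_eq_right (not_lt.1 hXp), hneg hXp]

/-- Derivative, in the slope `s`, of the integral over the wedge `0 < X p`, `y ≤ X p * s`. -/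
theorem hasDerivAt_integral_wedge {α : Type*} [MeasurableSpace α] (μ : Measure α) [SFinite μ]
    {X : α → ℝ} (hX : Measurable X) {h : α × ℝ → ℝ} (hm : Measurable h) {s₁ : ℝ} (hs₁ : 0 < s₁)
    (hi : IntegrableOn h {q | 0 < X q.1 ∧ q.2 ≤ X q.1 * s₁} (μ.prod volume))
    {B : α → ℝ} (hB : Integrable B μ)
    (hbound : ∀ s, |s| < s₁ → ∀ p, ‖max (X p) 0 * h (p, X p * s)‖ ≤ B p)
    (hcont : ∀ᵐ p ∂μ, ContinuousAt (fun s => max (X p) 0 * h (p, X p * s)) 0) :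
    HasDerivAt (fun s => ∫ q in {q : α × ℝ | 0 < X q.1 ∧ q.2 ≤ X q.1 * s}, h q ∂(μ.prod volume))
      (∫ p, max (X p) 0 * h (p, 0) ∂μ) 0 := by
  set g : ℝ → ℝ := fun s => ∫ p, max (X p) 0 * h (p, X p * s) ∂μ with hg
  have hgm : StronglyMeasurable g := by
    have : StronglyMeasurable
        (fun q : ℝ × α => max (X q.2) 0 * h (q.2, X q.2 * q.1)) := by
      apply Measurable.stronglyMeasurable
      fun_prop
    exact this.integral_prod_right
  have hSm : MeasurableSet {q : α × ℝ | 0 < X q.1} :=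
    measurableSet_lt measurable_const (hX.comp measurable_fst)
  have hWm : ∀ s, MeasurableSet {q : α × ℝ | q.2 ≤ X q.1 * s} := fun s =>
    measurableSet_le measurable_snd ((hX.comp measurable_fst).mul_const s)
  have hsplit : ∀ s, {q : α × ℝ | 0 < X q.1 ∧ q.2 ≤ X q.1 * s} =
      {q : α × ℝ | 0 < X q.1} ∩ {q : α × ℝ | q.2 ≤ X q.1 * s} := fun s => rfl
  have hfiber : ∀ s ≤ s₁, IntegrableOn g (Set.Iic s) ∧
      ∫ q in {q : α × ℝ | 0 < X q.1 ∧ q.2 ≤ X q.1 * s}, h q ∂(μ.prod volume) =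
        ∫ r in Set.Iic s, g r := by
    intro s hs
    have hsub : {q : α × ℝ | 0 < X q.1 ∧ q.2 ≤ X q.1 * s} ⊆
        {q | 0 < X q.1 ∧ q.2 ≤ X q.1 * s₁} := fun q hq =>
      ⟨hq.1, hq.2.trans (mul_le_mul_of_nonneg_left hs hq.1.le)⟩
    have hintegrable : IntegrableOn (Set.indicator {q : α × ℝ | q.2 ≤ X q.1 * s} h)
        {q | 0 < X q.1} (μ.prod volume) := by
      rw [integrableOn_indicator_iff (hWm s), Set.inter_comm, ← hsplit]
      exact hi.mono_set hsub
    obtain ⟨hQ, hQe⟩ := integral_prod_fiber_rescale μ hX (hm.indicator (hWm s)) hintegrable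
    have hQeq : ∀ (p : α) (r : ℝ), max (X p) 0 *
        Set.indicator {q : α × ℝ | q.2 ≤ X q.1 * s} h (p, X p * r) =
        Set.indicator (Set.Iic s) (fun r => max (X p) 0 * h (p, X p * r)) r := by
      intro p r
      by_cases hp : 0 < X p
      · by_cases hr : r ≤ s
        · simp [Set.indicator, hr, mul_le_mul_iff_right₀ hp]
        · simp [Set.indicator, hr, mul_le_mul_iff_right₀ hp]
      · simp [Set.indicator, max_eq_right (not_lt.1 hp)]
    have hQg : ∀ r, ∫ p, max (X p) 0 *
        Set.indicator {q : α × ℝ | q.2 ≤ X q.1 * s} h (p, X p * r) ∂μ =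
        Set.indicator (Set.Iic s) g r := by
      intro r
      simp only [hQeq]
      by_cases hr : r ≤ s
      · simp [Set.indicator, hr, hg]
      · simp [Set.indicator, hr]
    constructor
    · rw [← integrable_indicator_iff measurableSet_Iic]
      exact hQ.integral_prod_right.congr (Filter.Eventually.of_forall hQg)
    · rw [hsplit, ← setIntegral_indicator (hWm s), ← hQe, integral_prod_symm _ hQ,
        ← integral_indicator measurableSet_Iic]
      exact integral_congr_ae (Filter.Eventually.of_forall hQg)
  have hgc : ContinuousAt g 0 := by
    refine continuousAt_of_dominated (bound := B) ?_ ?_ hB hcont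
    · refine Filter.Eventually.of_forall fun s => Measurable.aestronglyMeasurable ?_
      fun_prop
    · have : ∀ᶠ s : ℝ in nhds 0, |s| < s₁ :=
        (continuous_abs (G := ℝ)).continuousAt.eventually_lt continuousAt_const (by simpa using hs₁)
      exact this.mono fun s hs => Filter.Eventually.of_forall (hbound s hs)
  have hftc : HasDerivAt (fun s => ∫ r in (0 : ℝ)..s, g r) (g 0) 0 :=
    intervalIntegral.integral_hasDerivAt_right (by simp) hgm.stronglyMeasurableAtFilter hgc
  have hg0 : g 0 = ∫ p, max (X p) 0 * h (p, 0) ∂μ := by simp [hg]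
  rw [← hg0]
  refine (hftc.const_add (∫ r in Set.Iic (0 : ℝ), g r)).congr_of_eventuallyEq ?_
  filter_upwards [Iio_mem_nhds hs₁] with s hs
  have h0 := hfiber 0 hs₁.le
  have hs' := hfiber s (le_of_lt hs)
  rw [hs'.2, ← intervalIntegral.integral_Iic_sub_Iic h0.1 hs'.1]
  ring

/-- Volume in an inner product space, in coordinates adapted to the hyperplane `(ℝ ∙ w)ᗮ`. -/
theorem exists_volume_eq_smul_map_hyperplane {d : ℕ} (w : Euc d) (hw : ‖w‖ = 1) (o : Euc d)
    (μ : Measure (ℝ ∙ w)ᗮ) [μ.IsAddHaarMeasure] :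
    ∃ c : ENNReal, c ≠ 0 ∧ c ≠ ⊤ ∧ (volume : Measure (Euc d)) =
        c • (μ.prod volume).map (fun q : (ℝ ∙ w)ᗮ × ℝ => o + (q.1 : Euc d) + q.2 • w) ∧
      MeasurableEmbedding (fun q : (ℝ ∙ w)ᗮ × ℝ => o + (q.1 : Euc d) + q.2 • w) := by
  set l : ((ℝ ∙ w)ᗮ × ℝ) →ₗ[ℝ] Euc d :=
    (ℝ ∙ w)ᗮ.subtype.coprod (LinearMap.toSpanSingleton ℝ (Euc d) w) with hl
  have hla : ∀ q, l q = (q.1 : Euc d) + q.2 • w := fun q => by simp [hl]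
  have hww : ⟪w, w⟫ = 1 := by rw [real_inner_self_eq_norm_sq, hw]; norm_num
  have hbij : Function.Bijective l := by
    constructor
    · rw [← LinearMap.ker_eq_bot, LinearMap.ker_eq_bot']
      rintro ⟨p, y⟩ hpy
      rw [hla] at hpy
      have h1 := congrArg (fun z => ⟪w, z⟫) hpy
      have h2 : ⟪w, (p : Euc d)⟫ = 0 := (Submodule.mem_orthogonal_singleton_iff_inner_right).1 p.2
      simp only [inner_add_right, inner_smul_right, h2, hww, inner_zero_right] at h1
      have hy : y = 0 := by linarith
      subst hy
      have : p = 0 := by simpa using hpy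
      simp [this]
    · intro z
      refine ⟨(⟨z - ⟪w, z⟫ • w, ?_⟩, ⟪w, z⟫), ?_⟩
      · rw [Submodule.mem_orthogonal_singleton_iff_inner_right]
        rw [inner_sub_right, inner_smul_right, hww, mul_one, sub_self]
      · simp [hla]
  set L := (LinearEquiv.ofBijective l hbij).toContinuousLinearEquiv with hL
  have hLa : ∀ q, L q = (q.1 : Euc d) + q.2 • w := fun q => hla q
  have hfun : (fun q : (ℝ ∙ w)ᗮ × ℝ => o + (q.1 : Euc d) + q.2 • w) = (fun z => o + z) ∘ L := by
    ext1 q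
    simp [hLa, add_assoc]
  have hmeasL : Measurable L := L.continuous.measurable
  refine ⟨Measure.addHaarScalarFactor volume ((μ.prod volume).map L), ?_, ENNReal.coe_ne_top, ?_, ?_⟩
  · exact ENNReal.coe_ne_zero.2 (Measure.addHaarScalarFactor_pos_of_isAddHaarMeasure _ _).ne'
  · rw [hfun, ← Measure.map_map (measurable_const_add o) hmeasL, map_add_left_eq_self]
    exact Measure.isAddLeftInvariant_eq_smul _ _
  · rw [hfun]
    exact (Homeomorph.addLeft o).measurableEmbedding.comp L.toHomeomorph.measurableEmbedding

/-- Integration over a subset of a hyperplane against the ambient Hausdorff measure. -/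
theorem setIntegral_hausdorffMeasure_hyperplane {d : ℕ} (H : Submodule ℝ (Euc d)) (o : Euc d)
    {r : ℝ} (hr : 0 ≤ r) {S : Set (Euc d)} (hS : MeasurableSet S) (hSH : ∀ x ∈ S, x - o ∈ H)
    (f : Euc d → ℝ) :
    ∫ x in S, f x ∂(μH[r]) = ∫ p in {p : H | o + (p : Euc d) ∈ S}, f (o + p) ∂(μH[r]) := by
  have hiso : Isometry (fun p : H => o + (p : Euc d)) :=
    (IsometryEquiv.addLeft o).isometry.comp H.subtypeₗᵢ.isometry
  have hemb : MeasurableEmbedding (fun p : H => o + (p : Euc d)) :=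
    hiso.isClosedEmbedding.measurableEmbedding
  have hrange : S ⊆ Set.range (fun p : H => o + (p : Euc d)) := fun x hx =>
    ⟨⟨x - o, hSH x hx⟩, by simp⟩
  have h1 := hemb.setIntegral_map (μ := μH[r]) f S
  rw [hiso.map_hausdorffMeasure (Or.inl hr), Measure.restrict_restrict hS,
    Set.inter_eq_left.2 hrange] at h1
  exact h1

theorem isAddHaarMeasure_hausdorffMeasure_hyperplane {d : ℕ} (hd : 1 ≤ d) {w : Euc d}
    (hw : ‖w‖ = 1) : (μH[(d - 1 : ℝ)] : Measure (ℝ ∙ w)ᗮ).IsAddHaarMeasure := by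
  have hfr : Module.finrank ℝ (ℝ ∙ w)ᗮ = d - 1 := by
    have h1 := Submodule.finrank_add_finrank_orthogonal (ℝ ∙ w)
    rw [finrank_span_singleton (by intro h; simp [h] at hw), finrank_euclideanSpace_fin] at h1
    omega
  have hexp : ((Module.finrank ℝ (ℝ ∙ w)ᗮ : ℕ) : ℝ) = (d - 1 : ℝ) := by
    rw [hfr, Nat.cast_sub hd, Nat.cast_one]
  rw [← hexp]
  infer_instance

/-- Bounded subsets of a hyperplane have finite Hausdorff measure. -/
theorem hausdorffMeasure_lt_top_of_subset_hyperplane {d : ℕ} (hd : 1 ≤ d) {w o : Euc d}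
    (hw : ‖w‖ = 1) {S : Set (Euc d)} (hSH : ∀ x ∈ S, ⟪x - o, w⟫ = 0) {R : ℝ}
    (hR : ∀ x ∈ S, ‖x - o‖ ≤ R) : μH[(d - 1 : ℝ)] S < ⊤ := by
  have := isAddHaarMeasure_hausdorffMeasure_hyperplane hd hw
  have hiso : Isometry (fun p : (ℝ ∙ w)ᗮ => o + (p : Euc d)) :=
    (IsometryEquiv.addLeft o).isometry.comp (ℝ ∙ w)ᗮ.subtypeₗᵢ.isometry
  have hsub : S ⊆ (fun p : (ℝ ∙ w)ᗮ => o + (p : Euc d)) '' Metric.closedBall 0 R := fun x hx =>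
    ⟨⟨x - o, Submodule.mem_orthogonal_singleton_iff_inner_left.2 (hSH x hx)⟩,
      by simpa using hR x hx, by simp⟩
  refine (measure_mono hsub).trans_lt ?_
  rw [hiso.hausdorffMeasure_image (Or.inl (sub_nonneg.2 (by exact_mod_cast hd)))]
  exact measure_closedBall_lt_top

theorem neg_pi_le_polarAngle (a b : ℝ) : -Real.pi ≤ polarAngle a b := by
  unfold polarAngle
  split_ifs
  · exact le_rfl
  · exact (Complex.neg_pi_lt_arg _).le

theorem measurable_polarAngle : Measurable (fun q : ℝ × ℝ => polarAngle q.1 q.2) := by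
  have h : Measurable (fun q : ℝ × ℝ => Complex.arg ⟨q.1, q.2⟩) :=
    Complex.measurable_arg.comp Complex.measurableEquivRealProd.symm.measurable
  exact Measurable.ite (measurableSet_eq_fun h measurable_const) measurable_const h

theorem polarAngle_nonpos_iff {a b : ℝ} : polarAngle a b ≤ 0 ↔ b ≤ 0 := by
  unfold polarAngle
  split_ifs with h
  · have := (Complex.arg_eq_pi_iff.1 h).2
    simp only at this
    simp [this, Real.pi_pos.le]
  · rcases lt_trichotomy b 0 with hb | hb | hb
    · simp [hb.le, (Complex.arg_neg_iff (z := ⟨a, b⟩)).2 hb |>.le]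
    · subst hb
      have ha : 0 ≤ a := by
        by_contra! ha
        exact h (Complex.arg_eq_pi_iff.2 ⟨ha, rfl⟩)
      exact iff_of_true (Complex.arg_eq_zero_iff.2 ⟨ha, rfl⟩).le le_rfl
    · have h1 : 0 ≤ Complex.arg ⟨a, b⟩ := Complex.arg_nonneg_iff.2 hb.le
      have h2 : Complex.arg ⟨a, b⟩ ≠ 0 := fun h0 => hb.ne' (Complex.arg_eq_zero_iff.1 h0).2
      exact iff_of_false (lt_of_le_of_ne h1 h2.symm).not_ge hb.not_ge

theorem polarAngle_eq_zero_iff {a b : ℝ} : polarAngle a b = 0 ↔ 0 ≤ a ∧ b = 0 := by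
  rw [← Complex.arg_eq_zero_iff (z := ⟨a, b⟩)]
  unfold polarAngle
  split_ifs with h
  · simp [h, Real.pi_ne_zero]
  · rfl

theorem polarAngle_le_iff_of_pos {a b t : ℝ} (ha : 0 < a) (ht : |t| < Real.pi / 2) :
    polarAngle a b ≤ t ↔ b ≤ a * Real.tan t := by
  have harg : |Complex.arg ⟨a, b⟩| < Real.pi / 2 := Complex.abs_arg_lt_pi_div_two_iff.2 (Or.inl ha)
  have hne : Complex.arg ⟨a, b⟩ ≠ Real.pi := by
    have := (abs_lt.1 harg).2
    have := Real.pi_pos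
    intro h
    linarith
  rw [polarAngle, if_neg hne, ← Real.strictMonoOn_tan.le_iff_le (abs_lt.1 harg) (abs_lt.1 ht),
    Complex.tan_arg, div_le_iff₀' ha]

theorem polarAngle_le_iff_of_neg {a b t : ℝ} (ha : a < 0) (ht : |t| < Real.pi / 2) :
    polarAngle a b ≤ t ↔ b ≤ 0 := by
  obtain ⟨ht1, ht2⟩ := abs_lt.1 ht
  have hpi := Real.pi_pos
  have harg : Real.pi / 2 ≤ |Complex.arg ⟨a, b⟩| := by
    by_contra! h
    rcases Complex.abs_arg_lt_pi_div_two_iff.1 h with h | h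
    · exact absurd h ha.not_gt
    · exact ha.ne (congrArg Complex.re h)
  rw [← polarAngle_nonpos_iff (a := a)]
  unfold polarAngle
  split_ifs with h
  · constructor <;> intro <;> linarith
  · rcases le_abs.1 harg with h' | h' <;> constructor <;> intro <;> linarith

/-- Derivative at `0` of the integral of `f` over the part of `P` with polar angle at most `t`. -/
theorem exists_hasDerivAt_integral_hinge {d : ℕ} (hd : 1 ≤ d)
    {P : Set (Euc d)} (hPm : MeasurableSet P)
    {o u w : Euc d} (hu : ‖u‖ = 1) (hw : ‖w‖ = 1) (huw : ⟪u, w⟫ = 0) {R s₁ : ℝ} (hs₁ : 0 < s₁)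
    (hbdd : ∀ q ∈ P, ⟪q - o, w⟫ ≤ 0 → ‖q - o‖ ≤ R)
    (hbdd' : ∀ q ∈ P, 0 < ⟪q - o, u⟫ → ⟪q - o, w⟫ ≤ ⟪q - o, u⟫ * s₁ → ‖q - o‖ ≤ R)
    (hloc : ∀ μ : Measure (ℝ ∙ w)ᗮ, μ.IsAddHaarMeasure → ∀ᵐ p : (ℝ ∙ w)ᗮ ∂μ,
      ∀ᶠ q in nhds (o + (p : Euc d)), (q ∈ P ↔ o + (p : Euc d) ∈ P)) :
    (∀ᶠ t in nhds (0 : ℝ), ∀ q ∈ P, polarAngle ⟪q - o, u⟫ ⟪q - o, w⟫ ≤ t → ‖q - o‖ ≤ R) ∧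
    ∃ c : ℝ, ∀ f : Euc d → ℝ, Continuous f →
      HasDerivAt (fun t => ∫ q in {q ∈ P | polarAngle ⟪q - o, u⟫ ⟪q - o, w⟫ ≤ t}, f q)
        (c * ∫ q in P ∩ {q | polarAngle ⟪q - o, u⟫ ⟪q - o, w⟫ = 0},
          f q * Real.sqrt (⟪q - o, u⟫ ^ 2 + ⟪q - o, w⟫ ^ 2) ∂(μH[(d - 1 : ℝ)])) 0 := by
  have hx : Continuous fun q : Euc d => ⟪q - o, u⟫ := by fun_prop
  have hy : Continuous fun q : Euc d => ⟪q - o, w⟫ := by fun_prop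
  have hww : ⟪w, w⟫ = 1 := by rw [real_inner_self_eq_norm_sq, hw]; norm_num
  have hpw : ∀ p : (ℝ ∙ w)ᗮ, ⟪(p : Euc d), w⟫ = 0 := fun p =>
    (Submodule.mem_orthogonal_singleton_iff_inner_left).1 p.2
  have hwu : ⟪w, u⟫ = 0 := by rw [real_inner_comm]; exact huw
  have hxp : ∀ (p : (ℝ ∙ w)ᗮ) (τ : ℝ), ⟪o + (p : Euc d) + τ • w - o, u⟫ = ⟪(p : Euc d), u⟫ := by
    intro p τ
    rw [add_assoc, add_sub_cancel_left, inner_add_left, real_inner_smul_left, hwu]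
    ring
  have hyp : ∀ (p : (ℝ ∙ w)ᗮ) (τ : ℝ), ⟪o + (p : Euc d) + τ • w - o, w⟫ = τ := by
    intro p τ
    rw [add_assoc, add_sub_cancel_left, inner_add_left, real_inner_smul_left, hpw, hww]
    ring
  have hsmall : ∀ᶠ t in nhds (0 : ℝ), |t| < Real.pi / 2 ∧ Real.tan t < s₁ := by
    have h1 : ∀ᶠ t : ℝ in nhds 0, |t| < Real.pi / 2 :=
      (continuous_abs (G := ℝ)).continuousAt.eventually_lt continuousAt_const
        (by simpa using Real.pi_pos)
    have h2 : ∀ᶠ t : ℝ in nhds 0, Real.tan t < s₁ :=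
      (Real.continuousAt_tan.2 (by simp)).eventually_lt continuousAt_const (by simpa using hs₁)
    exact h1.and h2
  have hKb : ∀ t, |t| < Real.pi / 2 → Real.tan t < s₁ →
      ∀ q ∈ P, polarAngle ⟪q - o, u⟫ ⟪q - o, w⟫ ≤ t → ‖q - o‖ ≤ R := by
    intro t ht hts q hq hqt
    rcases lt_trichotomy ⟪q - o, u⟫ 0 with h | h | h
    · exact hbdd q hq ((polarAngle_le_iff_of_neg h ht).1 hqt)
    · refine hbdd q hq ?_
      by_contra! hpos
      rw [h] at hqt
      have h3 : Complex.arg ⟨0, ⟪q - o, w⟫⟩ = Real.pi / 2 :=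
        Complex.arg_eq_pi_div_two_iff.2 ⟨rfl, hpos⟩
      rw [polarAngle, h3, if_neg (by linarith [Real.pi_pos])] at hqt
      exact absurd ((le_abs_self t).trans_lt ht) hqt.not_gt
    · refine hbdd' q hq h (((polarAngle_le_iff_of_pos h ht).1 hqt).trans ?_)
      exact mul_le_mul_of_nonneg_left hts.le h.le
  refine ⟨hsmall.mono fun t ht => hKb t ht.1 ht.2, ?_⟩
  set μ : Measure (ℝ ∙ w)ᗮ := μH[(d - 1 : ℝ)] with hμ
  have hHaar : μ.IsAddHaarMeasure := isAddHaarMeasure_hausdorffMeasure_hyperplane hd hw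
  obtain ⟨c, hc0, hct, hvol, hemb⟩ := exists_volume_eq_smul_map_hyperplane w hw o μ
  refine ⟨c.toReal, fun f hf => ?_⟩
  set φ : (ℝ ∙ w)ᗮ × ℝ → Euc d := fun q => o + (q.1 : Euc d) + q.2 • w with hφ
  have hφc : Continuous φ := by fun_prop
  set X : (ℝ ∙ w)ᗮ → ℝ := fun p => ⟪(p : Euc d), u⟫ with hX
  have hXm : Measurable X := by
    have : Continuous X := by fun_prop
    exact this.measurable
  set F : Euc d → ℝ := P.indicator f with hF
  have hFm : Measurable F := hf.measurable.indicator hPm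
  -- a uniform bound for `f` on the relevant bounded region
  obtain ⟨C, hC⟩ := (isCompact_closedBall o R).exists_bound_of_continuousOn hf.continuousOn
  have hbddint : ∀ S : Set (Euc d), MeasurableSet S → (∀ q ∈ S, ‖q - o‖ ≤ R) →
      IntegrableOn f S := by
    intro S hS hSR
    refine (hf.continuousOn.integrableOn_compact (isCompact_closedBall o R)).mono_set ?_
    intro q hq
    simpa [dist_eq_norm] using hSR q hq
  have hWm : ∀ s, MeasurableSet {q : Euc d | 0 < ⟪q - o, u⟫ ∧ ⟪q - o, w⟫ ≤ ⟪q - o, u⟫ * s} :=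
    fun s => (measurableSet_lt measurable_const hx.measurable).inter
      (measurableSet_le hy.measurable (hx.measurable.mul_const s))
  have hpre : ∀ s, φ ⁻¹' {q : Euc d | 0 < ⟪q - o, u⟫ ∧ ⟪q - o, w⟫ ≤ ⟪q - o, u⟫ * s} =
      {q | 0 < X q.1 ∧ q.2 ≤ X q.1 * s} := by
    intro s
    ext q
    simp only [hφ, Set.mem_preimage, Set.mem_ofPred_eq, hxp, hyp, hX]
  have hwedge : HasDerivAt
      (fun s => ∫ q in {q | 0 < X q.1 ∧ q.2 ≤ X q.1 * s}, F (φ q) ∂(μ.prod volume))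
      (∫ p, max (X p) 0 * F (φ (p, 0)) ∂μ) 0 := by
    have hB0 : ∀ p, 0 ≤ Set.indicator (Metric.closedBall (0 : (ℝ ∙ w)ᗮ) (R * (1 + s₁)))
        (fun _ => R * C) p := by
      refine fun p => Set.indicator_nonneg (fun p hp => ?_) p
      have hR : 0 ≤ R :=
        nonneg_of_mul_nonneg_left (dist_nonneg.trans (Metric.mem_closedBall.1 hp)) (by linarith)
      exact mul_nonneg hR ((norm_nonneg _).trans (hC o (by simpa using hR)))
    refine hasDerivAt_integral_wedge (h := F ∘ φ) (s₁ := s₁)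
      (B := Set.indicator (Metric.closedBall 0 (R * (1 + s₁))) fun _ => R * C)
      μ hXm (hFm.comp hφc.measurable) hs₁ ?_ ?_ ?_ ?_
    · have h1 : IntegrableOn F
          {q : Euc d | 0 < ⟪q - o, u⟫ ∧ ⟪q - o, w⟫ ≤ ⟪q - o, u⟫ * s₁} := by
        rw [hF, integrableOn_indicator_iff hPm]
        exact hbddint _ (hPm.inter (hWm s₁)) fun q hq => hbdd' q hq.1 hq.2.1 hq.2.2
      rw [hvol, IntegrableOn, Measure.restrict_smul, integrable_smul_measure hc0 hct] at h1
      rw [← hpre]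
      exact hemb.integrableOn_map_iff.1 h1
    · rw [integrable_indicator_iff measurableSet_closedBall]
      exact integrableOn_const (measure_closedBall_lt_top.ne)
    · intro s hs p
      by_cases hXp : 0 < X p
      swap
      · simpa [max_eq_right (not_lt.1 hXp)] using hB0 p
      by_cases hq : φ (p, X p * s) ∈ P
      · have hxq : ⟪φ (p, X p * s) - o, u⟫ = X p := hxp p _
        have hyq : ⟪φ (p, X p * s) - o, w⟫ = X p * s := hyp p _
        have hqR : ‖φ (p, X p * s) - o‖ ≤ R := by
          refine hbdd' _ hq (by rw [hxq]; exact hXp) ?_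
          rw [hxq, hyq]
          exact mul_le_mul_of_nonneg_left ((le_abs_self s).trans hs.le) hXp.le
        have hXR : X p ≤ R := by
          refine le_trans ?_ hqR
          have := real_inner_le_norm (φ (p, X p * s) - o) u
          rwa [hxq, hu, mul_one] at this
        have hpR : ‖(p : Euc d)‖ ≤ R * (1 + s₁) := by
          have h1 : (p : Euc d) = (φ (p, X p * s) - o) - (X p * s) • w := by
            simp only [hφ]
            abel
          rw [h1]
          refine (norm_sub_le _ _).trans ?_
          rw [norm_smul, hw, mul_one, norm_mul, Real.norm_eq_abs, Real.norm_eq_abs, abs_of_pos hXp]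
          have := mul_le_mul hXR hs.le (abs_nonneg s) (hXp.le.trans hXR)
          linarith
        rw [Set.indicator_of_mem (by simpa using hpR), max_eq_left hXp.le, norm_mul,
          Real.norm_eq_abs, abs_of_pos hXp]
        refine mul_le_mul hXR ?_ (norm_nonneg _) (hXp.le.trans hXR)
        simp only [Function.comp, hF, Set.indicator_of_mem hq]
        exact hC _ (by simpa [dist_eq_norm] using hqR)
      · have : F (φ (p, X p * s)) = 0 := Set.indicator_of_notMem hq _
        simp only [Function.comp, this, mul_zero, norm_zero]
        exact hB0 p
    · filter_upwards [hloc μ hHaar] with p hp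
      refine continuousAt_const.mul ?_
      have hline : ContinuousAt (fun s => φ (p, X p * s)) 0 := by
        have : Continuous (fun s => φ (p, X p * s)) := by fun_prop
        exact this.continuousAt
      have h0 : φ (p, X p * 0) = o + (p : Euc d) := by simp [hφ]
      have hFc : ContinuousAt F (o + (p : Euc d)) := by
        by_cases hpP : o + (p : Euc d) ∈ P
        · refine hf.continuousAt.congr ?_
          filter_upwards [hp] with q hq
          exact (Set.indicator_of_mem (hq.2 hpP) f).symm
        · refine (continuousAt_const (y := (0 : ℝ))).congr ?_
          filter_upwards [hp] with q hq
          exact (Set.indicator_of_notMem (fun h => hpP (hq.1 h)) f).symm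
      exact ContinuousAt.comp (f := fun s => φ (p, X p * s)) (g := F) (by rwa [h0]) hline
  -- the Hausdorff integral over the slice is the wedge derivative
  have hslice : ∫ q in P ∩ {q | polarAngle ⟪q - o, u⟫ ⟪q - o, w⟫ = 0},
      f q * Real.sqrt (⟪q - o, u⟫ ^ 2 + ⟪q - o, w⟫ ^ 2) ∂(μH[(d - 1 : ℝ)]) =
      ∫ p, max (X p) 0 * F (φ (p, 0)) ∂μ := by
    have hSm : MeasurableSet (P ∩ {q | polarAngle ⟪q - o, u⟫ ⟪q - o, w⟫ = 0}) :=
      hPm.inter (measurableSet_eq_fun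
        (measurable_polarAngle.comp (hx.measurable.prodMk hy.measurable)) measurable_const)
    have hd' : (0 : ℝ) ≤ d - 1 := sub_nonneg.2 (by exact_mod_cast hd)
    rw [setIntegral_hausdorffMeasure_hyperplane (ℝ ∙ w)ᗮ o hd' hSm, ← hμ, ← integral_indicator]
    · congr 1 with p
      have h1 := hxp p 0
      have h2 := hyp p 0
      rw [zero_smul, add_zero] at h1 h2
      have hmem : p ∈ {p : (ℝ ∙ w)ᗮ | o + (p : Euc d) ∈
          P ∩ {q | polarAngle ⟪q - o, u⟫ ⟪q - o, w⟫ = 0}} ↔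
          o + (p : Euc d) ∈ P ∧ 0 ≤ ⟪(p : Euc d), u⟫ := by
        refine and_congr_right fun _ => ?_
        change polarAngle ⟪o + (p : Euc d) - o, u⟫ ⟪o + (p : Euc d) - o, w⟫ = 0 ↔ _
        rw [h1, h2, polarAngle_eq_zero_iff]
        simp
      simp only [hφ, zero_smul, add_zero, hX, hF]
      by_cases hpS : o + (p : Euc d) ∈ P ∧ 0 ≤ ⟪(p : Euc d), u⟫
      · rw [Set.indicator_of_mem (hmem.2 hpS), h1, h2, Set.indicator_of_mem hpS.1,
          max_eq_left hpS.2, zero_pow two_ne_zero, add_zero, Real.sqrt_sq hpS.2, mul_comm]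
      · rw [Set.indicator_of_notMem (fun h => hpS (hmem.1 h))]
        by_cases hpP : o + (p : Euc d) ∈ P
        · rw [max_eq_right (not_le.1 fun h => hpS ⟨hpP, h⟩).le, zero_mul]
        · rw [Set.indicator_of_notMem hpP, mul_zero]
    · exact (by fun_prop : Measurable fun p : (ℝ ∙ w)ᗮ => o + (p : Euc d)) hSm
    · rintro q ⟨_, hq⟩
      rw [Submodule.mem_orthogonal_singleton_iff_inner_left]
      exact (polarAngle_eq_zero_iff.1 hq).2
  rw [hslice]
  have htan : HasDerivAt Real.tan 1 0 := by
    simpa using Real.hasDerivAt_tan (x := 0) (by simp)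
  have hcomp := (HasDerivAt.comp (0 : ℝ) (h := Real.tan) (by simpa using hwedge) htan).const_mul
    c.toReal
  rw [mul_one] at hcomp
  refine (hcomp.const_add (∫ q in {q ∈ P | ⟪q - o, w⟫ ≤ 0} ∩ {q | ⟪q - o, u⟫ ≤ 0}, f q)
    ).congr_of_eventuallyEq ?_
  filter_upwards [hsmall] with t ht
  have hKm : MeasurableSet {q ∈ P | polarAngle ⟪q - o, u⟫ ⟪q - o, w⟫ ≤ t} :=
    hPm.inter (measurableSet_le
      (measurable_polarAngle.comp (hx.measurable.prodMk hy.measurable)) measurable_const)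
  have hNm : MeasurableSet {q : Euc d | ⟪q - o, u⟫ ≤ 0} :=
    measurableSet_le hx.measurable measurable_const
  rw [← integral_inter_add_sdiff hNm
    (hbddint _ hKm fun q hq => hKb t ht.1 ht.2 q hq.1 hq.2)]
  congr 1
  · refine setIntegral_congr_set ?_
    have hnull : ∀ᵐ q : Euc d, ⟪q - o, u⟫ ≠ 0 := by
      have h1 := addHaar_linear_levelSet (volume : Measure (Euc d)) (innerₛₗ ℝ u) (by
        intro h
        have := congrArg (fun l => l u) h
        simp [hu] at this) ⟪u, o⟫
      rw [ae_iff]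
      convert h1 using 2
      ext q
      change ¬ ⟪q - o, u⟫ ≠ 0 ↔ ⟪u, q⟫ = ⟪u, o⟫
      rw [not_not, inner_sub_left, sub_eq_zero, real_inner_comm u, real_inner_comm u]
    filter_upwards [hnull] with q hq
    refine propext (and_congr_left fun hq0 => and_congr_right fun _ => ?_)
    exact polarAngle_le_iff_of_neg (lt_of_le_of_ne hq0 hq) ht.1
  · have hset : {q ∈ P | polarAngle ⟪q - o, u⟫ ⟪q - o, w⟫ ≤ t} \ {q | ⟪q - o, u⟫ ≤ 0} =
        {q : Euc d | 0 < ⟪q - o, u⟫ ∧ ⟪q - o, w⟫ ≤ ⟪q - o, u⟫ * Real.tan t} ∩ P := by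
      ext q
      simp only [Set.mem_sdiff, Set.mem_ofPred_eq, not_le, Set.mem_inter_iff]
      constructor
      · rintro ⟨⟨h1, h2⟩, h3⟩
        exact ⟨⟨h3, (polarAngle_le_iff_of_pos h3 ht.1).1 h2⟩, h1⟩
      · rintro ⟨⟨h3, h2⟩, h1⟩
        exact ⟨⟨h1, (polarAngle_le_iff_of_pos h3 ht.1).2 h2⟩, h3⟩
    rw [hset, ← setIntegral_indicator hPm, hvol, Measure.restrict_smul, integral_smul_measure,
      hemb.setIntegral_map, hpre]
    rfl

theorem centroid_apply {d : ℕ} {S : Set (Euc d)} (hS : Bornology.IsBounded S) (i : Fin d) :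
    centroid S i = (volume S).toReal⁻¹ * ∫ q in S, q i := by
  have hintegrable : IntegrableOn (fun q : Euc d => q) S := by
    obtain ⟨R, hR⟩ := hS.subset_closedBall 0
    exact (continuous_id.continuousOn.integrableOn_compact (isCompact_closedBall 0 R)).mono_set hR
  have h := (EuclideanSpace.proj i : Euc d →L[ℝ] ℝ).integral_comp_comm hintegrable
  change _ = (volume S).toReal⁻¹ *
    ∫ q in S, (EuclideanSpace.proj i : Euc d →L[ℝ] ℝ) q
  rw [h]
  rfl

theorem covMatrix_apply {d : ℕ} {S : Set (Euc d)} (hS : Bornology.IsBounded S) (i j : Fin d) :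
    covMatrix S i j = (volume S).toReal⁻¹ * (∫ q in S, q i * q j) -
      ((volume S).toReal⁻¹ * ∫ q in S, q i) * ((volume S).toReal⁻¹ * ∫ q in S, q j) := by
  obtain ⟨R, hR⟩ := hS.subset_closedBall 0
  have hintegrable : ∀ f : Euc d → ℝ, Continuous f → IntegrableOn f S := fun f hf =>
    (hf.continuousOn.integrableOn_compact (isCompact_closedBall 0 R)).mono_set hR
  simp only [covMatrix, Matrix.of_apply]
  rw [centroid_apply hS, centroid_apply hS]
  set V := (volume S).toReal with hV
  set mi := ∫ q in S, q i
  set mj := ∫ q in S, q j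
  have h1 : ∫ q in S, (q i - V⁻¹ * mi) * (q j - V⁻¹ * mj) =
      (∫ q in S, q i * q j) - mi * (V⁻¹ * mj) - (V⁻¹ * mi) * mj + (V⁻¹ * mi) * (V⁻¹ * mj) * V := by
    have h2 : ∀ q : Euc d, (q i - V⁻¹ * mi) * (q j - V⁻¹ * mj) =
        q i * q j - q i * (V⁻¹ * mj) - (V⁻¹ * mi) * q j + (V⁻¹ * mi) * (V⁻¹ * mj) := fun q => by
      ring
    simp only [h2]
    rw [integral_add, integral_sub, integral_sub, integral_mul_const, integral_const_mul,
      setIntegral_const, smul_eq_mul, mul_comm (volume.real S)]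
    · rfl
    all_goals exact hintegrable _ (by fun_prop)
  rw [h1]
  by_cases hV0 : V = 0
  · simp [hV0]
  · field_simp
    ring

/-- Derivative of the determinant of the covariance matrix of a family of bounded sets, in terms
of the derivatives of its moments. -/
theorem hasDerivAt_det_covMatrix {d : ℕ} {S : ℝ → Set (Euc d)}
    (hb : ∀ᶠ t in nhds (0 : ℝ), Bornology.IsBounded (S t)) (hiso : IsIsotropic (S 0))
    (hV : (volume (S 0)).toReal ≠ 0) {D : (Euc d → ℝ) → ℝ}
    (hD : ∀ f, Continuous f → HasDerivAt (fun t => ∫ q in S t, f q) (D f) 0) :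
    HasDerivAt (fun t => (volume (S t)).toReal) (D fun _ => 1) 0 ∧
      HasDerivAt (fun t => (covMatrix (S t)).det)
        ((D (fun q => ‖q‖ ^ 2) - d * D fun _ => 1) / (volume (S 0)).toReal) 0 := by
  have hvol : HasDerivAt (fun t => (volume (S t)).toReal) (D fun _ => 1) 0 := by
    refine (hD (fun _ => 1) continuous_const).congr_of_eventuallyEq
      (Filter.Eventually.of_forall fun t => ?_)
    simp [Measure.real]
  refine ⟨hvol, ?_⟩
  have hb0 := hb.self_of_nhds
  have hci : ∀ i, (volume (S 0)).toReal⁻¹ * ∫ q in S 0, q i = 0 := fun i => by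
    rw [← centroid_apply hb0, hiso.1]
    rfl
  have hMij : ∀ i j, (volume (S 0)).toReal⁻¹ * ∫ q in S 0, q i * q j =
      (1 : Matrix (Fin d) (Fin d) ℝ) i j := fun i j => by
    have := covMatrix_apply hb0 i j
    rw [hci, hci, hiso.2, mul_zero, sub_zero] at this
    exact this.symm
  have hsum : ∑ i : Fin d, D (fun q => q i * q i) = D (fun q => ‖q‖ ^ 2) := by
    have h1 : HasDerivAt (fun t => ∑ i : Fin d, ∫ q in S t, q i * q i)
        (∑ i : Fin d, D (fun q => q i * q i)) 0 :=
      HasDerivAt.fun_sum fun i _ => hD _ (by fun_prop)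
    refine h1.unique ((hD (fun q => ‖q‖ ^ 2) (by fun_prop)).congr_of_eventuallyEq ?_)
    filter_upwards [hb] with t ht
    obtain ⟨R, hR⟩ := ht.subset_closedBall 0
    rw [← integral_finsetSum]
    · congr 1 with q
      simp only [EuclideanSpace.real_norm_sq_eq, ← sq]
    · intro i _
      have hc : Continuous fun q : Euc d => q i * q i := by fun_prop
      exact (hc.continuousOn.integrableOn_compact (isCompact_closedBall 0 R)).mono_set hR
  set A' : Matrix (Fin d) (Fin d) ℝ := Matrix.of fun i j =>
    (D (fun q => q i * q j) - (1 : Matrix (Fin d) (Fin d) ℝ) i j * D fun _ => 1) /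
      (volume (S 0)).toReal with hA'
  have htr : A'.trace = (D (fun q => ‖q‖ ^ 2) - d * D fun _ => 1) / (volume (S 0)).toReal := by
    simp [Matrix.trace, hA', ← Finset.sum_div, Finset.sum_sub_distrib, hsum]
  rw [← htr]
  refine hasDerivAt_det_of_eq_one (fun i j => ?_) hiso.2
  have hinv := hvol.inv hV
  have hm : ∀ i : Fin d, HasDerivAt (fun t => ∫ q in S t, q i) (D fun q => q i) 0 := fun i =>
    hD _ (by fun_prop)
  have key := (hinv.mul (hD (fun q => q i * q j) (by fun_prop))).sub
    ((hinv.mul (hm i)).mul (hinv.mul (hm j)))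
  refine HasDerivAt.congr_of_eventuallyEq (key.congr_deriv ?_) ?_
  · have hi := hci i
    have hj := hci j
    have hij := hMij i j
    simp only [Pi.mul_apply, Pi.inv_apply]
    rw [hi, hj, hA', Matrix.of_apply, ← hij]
    field_simp
    ring
  · filter_upwards [hb] with t ht
    rw [covMatrix_apply ht]
    rfl

/-- If `K` is the part of a convex set `P` below a hyperplane and `K` is bounded and reaches strictly
below the hyperplane, then so is the part of `P` below nearby hinged hyperplanes. -/
theorem exists_bound_below_hinge {d : ℕ} {P : Set (Euc d)} (hP : Convex ℝ P) {o u w q₀ : Euc d}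
    (hu : ‖u‖ = 1) {R : ℝ} (hR : ∀ q ∈ P, ⟪q - o, w⟫ ≤ 0 → ‖q - o‖ ≤ R) (hq₀ : q₀ ∈ P)
    (hq₀w : ⟪q₀ - o, w⟫ < 0) :
    ∃ s₁ > 0, ∀ q ∈ P, 0 < ⟪q - o, u⟫ → ⟪q - o, w⟫ ≤ ⟪q - o, u⟫ * s₁ → ‖q - o‖ ≤ 2 * R := by
  have hR0 : 0 ≤ R := (norm_nonneg _).trans (hR q₀ hq₀ hq₀w.le)
  set h := -⟪q₀ - o, w⟫ with hh
  have hpos : 0 < h := by linarith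
  refine ⟨h / (4 * (R + 1)), by positivity, fun q hq hx hy => ?_⟩
  rcases le_or_gt ⟪q - o, w⟫ 0 with hle | hgt
  · linarith [hR q hq hle]
  set y := ⟪q - o, w⟫ with hydef
  have hyh : 0 < y + h := by linarith
  set r := (h / (y + h)) • q + (y / (y + h)) • q₀ with hr
  have hsum : h / (y + h) + y / (y + h) = 1 := by field_simp; ring
  have hrP : r ∈ P := hP hq hq₀ (by positivity) (by positivity) hsum
  have hro : r - o = (h / (y + h)) • (q - o) + (y / (y + h)) • (q₀ - o) := by
    have h1 : o = (h / (y + h)) • o + (y / (y + h)) • o := by rw [← add_smul, hsum, one_smul]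
    rw [hr, smul_sub, smul_sub]
    nth_rewrite 1 [h1]
    abel
  have hrw : ⟪r - o, w⟫ = 0 := by
    rw [hro, inner_add_left, real_inner_smul_left, real_inner_smul_left, ← hydef,
      show ⟪q₀ - o, w⟫ = -h by rw [hh]; ring]
    field_simp
    ring
  have hrR : ‖r - o‖ ≤ R := hR r hrP hrw.le
  have hqR : ‖q₀ - o‖ ≤ R := hR q₀ hq₀ hq₀w.le
  have hscaled : h • (q - o) = (y + h) • (r - o) - y • (q₀ - o) := by
    rw [hro, smul_add, smul_smul, smul_smul, mul_div_cancel₀ _ hyh.ne', mul_div_cancel₀ _ hyh.ne']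
    abel
  have hn : h * ‖q - o‖ ≤ (y + h) * R + y * R := by
    have h1 : ‖h • (q - o)‖ = h * ‖q - o‖ := by
      rw [norm_smul, Real.norm_eq_abs, abs_of_pos hpos]
    rw [← h1, hscaled]
    refine (norm_sub_le _ _).trans ?_
    rw [norm_smul, norm_smul, Real.norm_eq_abs, Real.norm_eq_abs, abs_of_pos hyh, abs_of_pos hgt]
    gcongr
  have hxn : ⟪q - o, u⟫ ≤ ‖q - o‖ := by
    simpa [hu] using real_inner_le_norm (q - o) u
  have hyn : y * (4 * (R + 1)) ≤ h * ‖q - o‖ := by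
    have h2 : y ≤ ‖q - o‖ * (h / (4 * (R + 1))) := hy.trans (by gcongr)
    have h3 : ‖q - o‖ * (h / (4 * (R + 1))) * (4 * (R + 1)) = h * ‖q - o‖ := by field_simp
    rw [← h3]
    gcongr
  have h4 : h * ‖q - o‖ ≤ h * (2 * R) := by nlinarith
  exact le_of_mul_le_mul_left h4 hpos

/-- A polyhedron is locally constant along almost all points of a hyperplane which contains none
of its bounding hyperplanes. -/
theorem ae_hyperplane_eventually_mem_iff {d : ℕ} {ι : Type*} [Finite ι] {a : ι → Euc d} {c : ι → ℝ}
    {P : Set (Euc d)} {J : Set ι} (hP : ∀ q, q ∈ P ↔ ∀ j ∈ J, ⟪a j, q⟫ ≤ c j) {o w : Euc d}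
    (hne : ∀ j ∈ J, ∀ r : ℝ, a j = r • w → ⟪a j, o⟫ ≠ c j) (μ : Measure (ℝ ∙ w)ᗮ)
    [μ.IsAddHaarMeasure] :
    ∀ᵐ p : (ℝ ∙ w)ᗮ ∂μ, ∀ᶠ q in nhds (o + (p : Euc d)), (q ∈ P ↔ o + (p : Euc d) ∈ P) := by
  have hae : ∀ᵐ p : (ℝ ∙ w)ᗮ ∂μ, ∀ j, j ∈ J → ⟪a j, o + (p : Euc d)⟫ ≠ c j := by
    rw [ae_all_iff]
    intro j
    by_cases hj : j ∈ J
    swap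
    · exact Filter.Eventually.of_forall fun p h => absurd h hj
    set l : (ℝ ∙ w)ᗮ →ₗ[ℝ] ℝ := (innerₛₗ ℝ (a j)).comp (ℝ ∙ w)ᗮ.subtype with hl
    by_cases hl0 : l = 0
    · have hmem : a j ∈ (ℝ ∙ w)ᗮᗮ := by
        rw [Submodule.mem_orthogonal']
        intro p hp
        exact congrArg (fun m => m ⟨p, hp⟩) hl0
      rw [Submodule.orthogonal_orthogonal, Submodule.mem_span_singleton] at hmem
      obtain ⟨r, hr⟩ := hmem
      refine Filter.Eventually.of_forall fun p _ => ?_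
      have hp : ⟪a j, (p : Euc d)⟫ = 0 := congrArg (fun m => m p) hl0
      rw [inner_add_right, hp, add_zero]
      exact hne j hj r hr.symm
    · have h1 := addHaar_linear_levelSet μ l hl0 (c j - ⟪a j, o⟫)
      filter_upwards [measure_eq_zero_iff_ae_notMem.1 h1] with p hp _ heq
      refine hp ?_
      change ⟪a j, (p : Euc d)⟫ = c j - ⟪a j, o⟫
      rw [← heq, inner_add_right]
      ring
  filter_upwards [hae] with p hp
  have hev : ∀ j, ∀ᶠ q in nhds (o + (p : Euc d)), j ∈ J →
      (⟪a j, q⟫ ≤ c j ↔ ⟪a j, o + (p : Euc d)⟫ ≤ c j) := by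
    intro j
    by_cases hj : j ∈ J
    swap
    · exact Filter.Eventually.of_forall fun q h => absurd h hj
    have hcont : ContinuousAt (fun q => ⟪a j, q⟫) (o + (p : Euc d)) := by fun_prop
    rcases lt_or_gt_of_ne (hp j hj) with hlt | hgt
    · filter_upwards [hcont.eventually_lt continuousAt_const hlt] with q hq _
      exact iff_of_true hq.le hlt.le
    · filter_upwards [continuousAt_const.eventually_lt hcont hgt] with q hq _
      exact iff_of_false hq.not_ge hgt.not_ge
  filter_upwards [Filter.eventually_all.2 hev] with q hq
  rw [hP, hP]
  exact forall₂_congr hq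

/-- A vector orthogonal to the affine span of `d` affinely independent points of a hyperplane
with normal `w` is a multiple of `w`. -/
theorem exists_eq_smul_of_affineIndependent {d : ℕ} (hd : 1 ≤ d) {v : Fin d → Euc d}
    (hv : AffineIndependent ℝ v) {o w b : Euc d} {r : ℝ} (hw : ‖w‖ = 1)
    (hvw : ∀ j, ⟪v j - o, w⟫ = 0) (hvb : ∀ j, ⟪b, v j⟫ = r) : ∃ l : ℝ, b = l • w := by
  have hle : vectorSpan ℝ (Set.range v) ≤ (ℝ ∙ w)ᗮ := by
    rw [vectorSpan_def, Submodule.span_le]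
    rintro _ ⟨_, ⟨i, rfl⟩, _, ⟨j, rfl⟩, rfl⟩
    refine Submodule.mem_orthogonal_singleton_iff_inner_left.2 ?_
    change ⟪v i - v j, w⟫ = 0
    rw [← sub_sub_sub_cancel_right _ _ o, inner_sub_left, hvw, hvw, sub_zero]
  have hle' : vectorSpan ℝ (Set.range v) ≤ (ℝ ∙ b)ᗮ := by
    rw [vectorSpan_def, Submodule.span_le]
    rintro _ ⟨_, ⟨i, rfl⟩, _, ⟨j, rfl⟩, rfl⟩
    refine Submodule.mem_orthogonal_singleton_iff_inner_right.2 ?_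
    change ⟪b, v i - v j⟫ = 0
    rw [inner_sub_right, hvb, hvb, sub_self]
  have heq : vectorSpan ℝ (Set.range v) = (ℝ ∙ w)ᗮ := by
    refine Submodule.eq_of_le_of_finrank_eq hle ?_
    have h1 := Submodule.finrank_add_finrank_orthogonal (ℝ ∙ w)
    rw [finrank_span_singleton (by intro h; simp [h] at hw), finrank_euclideanSpace_fin] at h1
    rw [hv.finrank_vectorSpan (n := d - 1) (by rw [Fintype.card_fin]; omega)]
    omega
  rw [heq] at hle'
  have h2 : b ∈ (ℝ ∙ w) := by
    rw [← Submodule.orthogonal_orthogonal (ℝ ∙ w), Submodule.mem_orthogonal']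
    intro p hp
    exact Submodule.mem_orthogonal_singleton_iff_inner_right.1 (hle' hp)
  obtain ⟨l, hl⟩ := Submodule.mem_span_singleton.1 h2
  exact ⟨l, hl.symm⟩

/-- **Statement 5** (Lemma: derivative with respect to hinging). Let `K` be an isotropic
simplicial polytope with irredundant H-representation `K = ∩ᵢ Hᵢ`, let `P` be the polyhedron
obtained by relaxing the halfspace of facet `i'`, and introduce cylindrical coordinates
`(ρ, θ, z)` around the axis `Z` spanned by all vertices of facet `i'` except `v j'`, oriented so
that the facet has `θ = 0` and `K` has `θ ∈ (-π, 0]`. With `K_t = {x ∈ P : θ(x) ∈ [-π, t]}`,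
`S₀ = P ∩ {θ = 0}`, and `D` the distribution on `S₀` with density proportional to `ρ`, the
function `t ↦ det A(K_t)` is differentiable at `0` with derivative
`(E_{X ∼ D}[‖X‖²] - d) · (d/dt vol K_t |₀) / vol K`. -/
theorem stmt6 {d m : ℕ} (K : Set (Euc d)) (hbody : IsConvexBody K)
    (hiso : IsIsotropic K) (hsimp : IsSimplicialPolytope d K)
    (a : Fin m → Euc d) (c : Fin m → ℝ) (ha : ∀ i, a i ≠ 0)
    (hrep : K = ⋂ i, {x : Euc d | ⟪a i, x⟫ ≤ c i})
    (hirr : ∀ i : Fin m, K ≠ ⋂ j ∈ Finset.univ.erase i, {x : Euc d | ⟪a j, x⟫ ≤ c j})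
    (i' : Fin m)
    (P : Set (Euc d)) (hP : P = ⋂ j ∈ Finset.univ.erase i', {x : Euc d | ⟪a j, x⟫ ≤ c j})
    (v : Fin d → Euc d) (hvind : AffineIndependent ℝ v)
    (hfacet : K ∩ {x : Euc d | ⟪a i', x⟫ = c i'} = convexHull ℝ (Set.range v))
    (j' : Fin d)
    (Z : AffineSubspace ℝ (Euc d)) (hZ : Z = affineSpan ℝ (v '' {j | j ≠ j'}))
    (o : Euc d) (ho : o ∈ (Z : Set (Euc d)) ∩ K)
    (u w : Euc d) (hu : u ∈ Z.directionᗮ) (hw : w ∈ Z.directionᗮ)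
    (hun : ‖u‖ = 1) (hwn : ‖w‖ = 1) (huw : ⟪u, w⟫ = 0)
    (θ ρ : Euc d → ℝ)
    (hθ : θ = fun x => polarAngle ⟪x - o, u⟫ ⟪x - o, w⟫)
    (hρ : ρ = fun x => Real.sqrt (⟪x - o, u⟫ ^ 2 + ⟪x - o, w⟫ ^ 2))
    (horient : ∀ x ∈ convexHull ℝ (Set.range v), θ x = 0)
    (hKrange : ∀ x ∈ K, θ x ∈ Set.Ioc (-Real.pi) 0)
    (Kt : ℝ → Set (Euc d))
    (hKt : Kt = fun t => {x ∈ P | θ x ∈ Set.Icc (-Real.pi) t})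
    (S₀ : Set (Euc d)) (hS₀ : S₀ = P ∩ {x : Euc d | θ x = 0})
    (EX : ℝ)
    (hEX : EX = (∫ x in S₀, ‖x‖ ^ 2 * ρ x ∂(μH[(d - 1 : ℝ)])) /
                (∫ x in S₀, ρ x ∂(μH[(d - 1 : ℝ)]))) :
    ∃ V : ℝ, HasDerivAt (fun t => (volume (Kt t)).toReal) V 0 ∧
      HasDerivAt (fun t => (covMatrix (Kt t)).det)
        ((EX - d) * V / (volume K).toReal) 0 := by
  have hd : 1 ≤ d := (Nat.zero_le _).trans_lt j'.2
  subst hθ hρ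
  have hKy : ∀ q ∈ K, ⟪q - o, w⟫ ≤ 0 := fun q hq => polarAngle_nonpos_iff.1 (hKrange q hq).2
  have hPmem : ∀ q, q ∈ P ↔ ∀ j ∈ {j | j ≠ i'}, ⟪a j, q⟫ ≤ c j := fun q => by
    simp [hP]
  have hKmem : ∀ q, q ∈ K ↔ ∀ j, ⟪a j, q⟫ ≤ c j := fun q => by
    rw [hrep]
    simp
  obtain ⟨hKcomp, -, q₀, hq₀⟩ := hbody
  have hq₀K : q₀ ∈ K := interior_subset hq₀
  have hww : ⟪w, w⟫ = 1 := by rw [real_inner_self_eq_norm_sq, hwn]; norm_num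
  have hq₀w : ⟪q₀ - o, w⟫ < 0 := by
    have hcont : ContinuousAt (fun ε : ℝ => q₀ + ε • w) 0 := by fun_prop
    have hev : ∀ᶠ ε : ℝ in nhds 0, q₀ + ε • w ∈ K :=
      hcont.eventually_mem (by simpa using mem_interior_iff_mem_nhds.1 hq₀)
    obtain ⟨δ, hδ, hball⟩ := Metric.eventually_nhds_iff.1 hev
    have h1 := hKy _ (hball (y := δ / 2)
      (by rw [dist_zero_right, Real.norm_eq_abs, abs_of_pos] <;> linarith))
    rw [add_sub_right_comm, inner_add_left, real_inner_smul_left, hww] at h1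
    linarith
  have hvhull : ∀ j, v j ∈ convexHull ℝ (Set.range v) := fun j =>
    subset_convexHull ℝ _ (Set.mem_range_self j)
  have hvw : ∀ j, ⟪v j - o, w⟫ = 0 := fun j =>
    (polarAngle_eq_zero_iff.1 (horient _ (hvhull j))).2
  have hva : ∀ j, ⟪a i', v j⟫ = c i' := fun j => by
    have h1 := hvhull j
    rw [← hfacet] at h1
    exact h1.2
  -- a bounding hyperplane through `o` with normal direction `w` is the hyperplane of the facet
  have hhalf : ∀ i, ∀ l : ℝ, a i = l • w → ⟪a i, o⟫ = c i →
      ∀ q, ⟪a i, q⟫ ≤ c i ↔ ⟪q - o, w⟫ ≤ 0 := by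
    intro i l hl hio
    have hdiff : ∀ q, ⟪a i, q⟫ - c i = l * ⟪q - o, w⟫ := fun q => by
      rw [← hio, ← inner_sub_right, hl, real_inner_smul_left, real_inner_comm]
    have hl0 : l ≠ 0 := by
      rintro rfl
      exact ha i (by rw [hl, zero_smul])
    have hlpos : 0 < l := by
      refine lt_of_le_of_ne ?_ hl0.symm
      by_contra! hneg
      have h1 := (hKmem q₀).1 hq₀K i
      have h2 := hdiff q₀
      nlinarith [mul_pos_of_neg_of_neg hneg hq₀w]
    intro q
    rw [← sub_nonpos, hdiff, mul_nonpos_iff_pos_imp_nonpos]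
    exact ⟨fun h => h.1 hlpos, fun h => ⟨fun _ => h, fun _ => hlpos.le⟩⟩
  obtain ⟨l, hl⟩ := exists_eq_smul_of_affineIndependent hd hvind hwn hvw hva
  have hio : ⟪a i', o⟫ = c i' := by
    have h1 := hvw j'
    rw [← hva j', hl, real_inner_smul_left, real_inner_smul_left, real_inner_comm,
      real_inner_comm (v j') w]
    rw [inner_sub_left, sub_eq_zero] at h1
    rw [h1]
  have hKP : ∀ q, q ∈ K ↔ q ∈ P ∧ ⟪q - o, w⟫ ≤ 0 := by
    intro q
    rw [hKmem, hPmem, ← hhalf i' l hl hio]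
    refine ⟨fun h => ⟨fun j _ => h j, h i'⟩, fun h j => ?_⟩
    by_cases hj : j = i'
    · exact hj ▸ h.2
    · exact h.1 j hj
  have hne : ∀ j ∈ {j | j ≠ i'}, ∀ r : ℝ, a j = r • w → ⟪a j, o⟫ ≠ c j := by
    intro j hj r hr hjo
    refine hirr i' ?_
    rw [← hP]
    ext q
    rw [hKP]
    exact ⟨fun h => h.1, fun h => ⟨h, (hhalf j r hr hjo q).1 ((hPmem q).1 h j hj)⟩⟩
  have hPclosed : IsClosed P := by
    rw [hP]
    exact isClosed_biInter fun j _ => isClosed_le (by fun_prop) continuous_const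
  have hPconvex : Convex ℝ P := by
    rw [hP]
    exact convex_iInter₂ fun j _ => convex_halfSpace_le (innerₛₗ ℝ (a j)).isLinear (c j)
  obtain ⟨R, hR⟩ := hKcomp.isBounded.subset_closedBall o
  have hRP : ∀ q ∈ P, ⟪q - o, w⟫ ≤ 0 → ‖q - o‖ ≤ R := fun q hq hqw => by
    simpa [dist_eq_norm] using hR ((hKP q).2 ⟨hq, hqw⟩)
  have hR0 : 0 ≤ R := (norm_nonneg _).trans (hRP q₀ ((hKP q₀).1 hq₀K).1 hq₀w.le)
  obtain ⟨s₁, hs₁, hbdd'⟩ :=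
    exists_bound_below_hinge hPconvex hun hRP ((hKP q₀).1 hq₀K).1 hq₀w
  obtain ⟨hKtb, C, hC⟩ := exists_hasDerivAt_integral_hinge hd hPclosed.measurableSet hun hwn huw hs₁
    (fun q hq hqw => (hRP q hq hqw).trans (by linarith)) hbdd'
    (fun μ _ => ae_hyperplane_eventually_mem_iff hPmem hne μ)
  have hKt' : Kt = fun t => {q ∈ P | polarAngle ⟪q - o, u⟫ ⟪q - o, w⟫ ≤ t} := by
    rw [hKt]
    ext t q
    exact and_congr_right fun _ => ⟨fun h => h.2, fun h => ⟨neg_pi_le_polarAngle _ _, h⟩⟩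
  have hKt0 : Kt 0 = K := by
    rw [hKt']
    ext q
    rw [hKP]
    exact and_congr_right fun _ => polarAngle_nonpos_iff
  have hKtbdd : ∀ᶠ t in nhds (0 : ℝ), Bornology.IsBounded (Kt t) := by
    filter_upwards [hKtb] with t ht
    refine (Metric.isBounded_closedBall (x := o) (r := 2 * R)).subset fun q hq => ?_
    rw [hKt'] at hq
    simpa [dist_eq_norm] using ht q hq.1 hq.2
  have hvolK : (volume (Kt 0)).toReal ≠ 0 := by
    rw [hKt0]
    exact (ENNReal.toReal_pos (Measure.measure_pos_of_mem_nhds volume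
      (mem_interior_iff_mem_nhds.1 hq₀)).ne' hKcomp.measure_lt_top.ne).ne'
  obtain ⟨h1, h2⟩ := hasDerivAt_det_covMatrix hKtbdd (hKt0.symm ▸ hiso) hvolK
    (D := fun f => C * ∫ q in S₀, f q * Real.sqrt (⟪q - o, u⟫ ^ 2 + ⟪q - o, w⟫ ^ 2)
      ∂(μH[(d - 1 : ℝ)])) (by rw [hKt', hS₀]; exact hC)
  refine ⟨_, h1, h2.congr_deriv ?_⟩
  rw [hKt0]
  congr 1
  simp only [one_mul]
  set N := ∫ q in S₀, ‖q‖ ^ 2 * Real.sqrt (⟪q - o, u⟫ ^ 2 + ⟪q - o, w⟫ ^ 2) ∂(μH[(d - 1 : ℝ)])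
    with hN
  set M := ∫ q in S₀, Real.sqrt (⟪q - o, u⟫ ^ 2 + ⟪q - o, w⟫ ^ 2) ∂(μH[(d - 1 : ℝ)]) with hM
  have hNM : EX * M = N := by
    rw [hEX]
    refine div_mul_cancel_of_imp fun hM0 => ?_
    have hS₀w : ∀ q ∈ S₀, ⟪q - o, w⟫ = 0 := fun q hq => by
      rw [hS₀] at hq
      exact (polarAngle_eq_zero_iff.1 hq.2).2
    have hS₀R : ∀ q ∈ S₀, ‖q - o‖ ≤ R := fun q hq =>
      hRP q (by rw [hS₀] at hq; exact hq.1) (hS₀w q hq).le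
    have hcont : Continuous fun q : Euc d =>
        Real.sqrt (⟪q - o, u⟫ ^ 2 + ⟪q - o, w⟫ ^ 2) := by fun_prop
    obtain ⟨B, hB⟩ := (isCompact_closedBall o R).exists_bound_of_continuousOn hcont.continuousOn
    have hS₀m : MeasurableSet S₀ := by
      rw [hS₀]
      exact hPclosed.measurableSet.inter (measurableSet_eq_fun (measurable_polarAngle.comp
        (Measurable.prodMk (by fun_prop) (by fun_prop))) measurable_const)
    have hintegrable : IntegrableOn (fun q : Euc d => Real.sqrt (⟪q - o, u⟫ ^ 2 + ⟪q - o, w⟫ ^ 2)) S₀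
        μH[(d - 1 : ℝ)] := by
      refine Measure.integrableOn_of_bounded (M := B)
        (hausdorffMeasure_lt_top_of_subset_hyperplane hd hwn hS₀w hS₀R).ne
        hcont.measurable.aestronglyMeasurable ?_
      filter_upwards [ae_restrict_mem hS₀m] with q hq
      exact hB q (by simpa [dist_eq_norm] using hS₀R q hq)
    have hzero := (integral_eq_zero_iff_of_nonneg (fun q => Real.sqrt_nonneg _) hintegrable).1 hM0
    refine integral_eq_zero_of_ae ?_
    filter_upwards [hzero] with q hq
    simp only [Pi.zero_apply] at hq ⊢
    rw [hq, mul_zero]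
  rw [← hNM]
  ring

end
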